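/- Under the stated hypotheses on G, the eigenvector x satisfies x_1 > x_0. -/

import Mathlib

open Matrix

/-- The signless Laplacian `Q(G) = D(G) + A(G)` of a finite simple graph `G`. -/
noncomputable def signlessLaplacian {V : Type*} [Fintype V] (G : SimpleGraph V) :
    Matrix V V ℝ :=
  letI := Classical.decEq V
  letI : DecidableRel G.Adj := Classical.decRel _
  Matrix.diagonal (fun v => (G.degree v : ℝ)) + G.adjMatrix ℝ

/-- The `Q`-index of `G`: the largest eigenvalue of the signless Laplacian `Q(G)`. -/
noncomputable def qIndex {V : Type*} [Fintype V] (G : SimpleGraph V) : ℝ :=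
  letI := Classical.decEq V
  sSup (spectrum ℝ (signlessLaplacian G))

/-!
For each edge `vw`, the entry `(Q x) v` collects a term `x v + x w`, so the edge `uv` contributes
equally to `(Q x) u` and `(Q x) v`. If the other neighbours of `u` form a proper subset `A` of the
other neighbours of `v`, and `Q x = q x` with `x` positive, subtracting the two entries gives
`q (x u - x v) < |A| (x u - x v)`. Since `|A| ≤ deg u ≤ q`, this forces `x u < x v`.
-/

section SignlessLaplacian

variable {V : Type*} [Fintype V] {G : SimpleGraph V} {x : V → ℝ} {q : ℝ} {u v : V}

theorem signlessLaplacian_mulVec_apply (G : SimpleGraph V) [DecidableRel G.Adj] (x : V → ℝ)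
    (v : V) : (signlessLaplacian G *ᵥ x) v = ∑ w ∈ G.neighborFinset v, (x v + x w) := by
  classical
  rw [Finset.sum_add_distrib, Finset.sum_const, G.card_neighborFinset_eq_degree, nsmul_eq_mul]
  simp only [signlessLaplacian, add_mulVec, Pi.add_apply, mulVec_diagonal,
    SimpleGraph.adjMatrix_mulVec_apply]
  congr!

theorem degree_le_of_signlessLaplacian_mulVec_eq_smul [DecidableRel G.Adj] (hx : 0 ≤ x)
    (hv : 0 < x v) (heig : signlessLaplacian G *ᵥ x = q • x) : (G.degree v : ℝ) ≤ q := by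
  refine le_of_mul_le_mul_right ?_ hv
  calc (G.degree v : ℝ) * x v = ∑ _w ∈ G.neighborFinset v, x v := by
        rw [Finset.sum_const, G.card_neighborFinset_eq_degree, nsmul_eq_mul]
    _ ≤ ∑ w ∈ G.neighborFinset v, (x v + x w) :=
        Finset.sum_le_sum fun w _ => le_add_of_nonneg_right (hx w)
    _ = (signlessLaplacian G *ᵥ x) v := (signlessLaplacian_mulVec_apply G x v).symm
    _ = q * x v := congrFun heig v

theorem signlessLaplacian_mulVec_sub [DecidableEq V] (G : SimpleGraph V) [DecidableRel G.Adj]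
    (x : V → ℝ) (u v : V) :
    (signlessLaplacian G *ᵥ x) u - (signlessLaplacian G *ᵥ x) v =
      ∑ w ∈ (G.neighborFinset u).erase v, (x u + x w) -
        ∑ w ∈ (G.neighborFinset v).erase u, (x v + x w) := by
  simp only [signlessLaplacian_mulVec_apply]
  by_cases huv : G.Adj u v
  · rw [← Finset.add_sum_erase _ _ ((G.mem_neighborFinset u v).2 huv),
      ← Finset.add_sum_erase _ _ ((G.mem_neighborFinset v u).2 huv.symm), add_comm (x v) (x u),
      add_sub_add_left_eq_sub]
  · rw [Finset.erase_eq_of_notMem (mt (G.mem_neighborFinset u v).1 huv),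
      Finset.erase_eq_of_notMem (mt (G.mem_neighborFinset v u).1 (huv ·.symm))]

theorem signlessLaplacian_mulVec_sub_lt [DecidableEq V] [DecidableRel G.Adj]
    (hx : ∀ w, 0 < x w) (huv : (G.neighborFinset u).erase v ⊂ (G.neighborFinset v).erase u) :
    (signlessLaplacian G *ᵥ x) u - (signlessLaplacian G *ᵥ x) v <
      ((G.neighborFinset u).erase v).card * (x u - x v) := by
  have hlt : ∑ w ∈ (G.neighborFinset u).erase v, (x v + x w) <
      ∑ w ∈ (G.neighborFinset v).erase u, (x v + x w) := by
    obtain ⟨z, hzv, hzu⟩ := Finset.exists_of_ssubset huv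
    exact Finset.sum_lt_sum_of_subset huv.subset hzv hzu (add_pos (hx v) (hx z))
      fun w _ _ => (add_pos (hx v) (hx w)).le
  calc (signlessLaplacian G *ᵥ x) u - (signlessLaplacian G *ᵥ x) v
      = ∑ w ∈ (G.neighborFinset u).erase v, (x u + x w) -
          ∑ w ∈ (G.neighborFinset v).erase u, (x v + x w) := signlessLaplacian_mulVec_sub G x u v
    _ < ∑ w ∈ (G.neighborFinset u).erase v, (x u + x w) -
          ∑ w ∈ (G.neighborFinset u).erase v, (x v + x w) := sub_lt_sub_left hlt _
    _ = ((G.neighborFinset u).erase v).card * (x u - x v) := by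
      rw [← Finset.sum_sub_distrib]
      simp only [add_sub_add_right_eq_sub, Finset.sum_const, nsmul_eq_mul]

theorem stmt_5_general (hx : ∀ w, 0 < x w) (heig : signlessLaplacian G *ᵥ x = q • x)
    (huv : G.neighborSet u \ {v} ⊂ G.neighborSet v \ {u}) : x u < x v := by
  classical
  set A := (G.neighborFinset u).erase v
  have hA : A ⊂ (G.neighborFinset v).erase u := by
    simpa [A, ← Finset.coe_ssubset] using huv
  have hAq : (A.card : ℝ) ≤ q :=
    (Nat.cast_le.2 Finset.card_erase_le).trans
      (degree_le_of_signlessLaplacian_mulVec_eq_smul (fun w => (hx w).le) (hx u) heig)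
  have hlt : q * (x u - x v) < A.card * (x u - x v) := by
    simpa [heig, mul_sub] using signlessLaplacian_mulVec_sub_lt hx hA
  by_contra! hvu
  exact hlt.not_ge (mul_le_mul_of_nonneg_right hAq (sub_nonneg.2 hvu))

end SignlessLaplacian

/-- for the maximal outer-planar graph of type `D_1` with `Δ = n - 3`,
the Perron eigenvector satisfies `x_1 > x_0`. -/
theorem stmt_5 (n k : ℕ) (hn : 7 ≤ n) (hk1 : 4 ≤ k) (hk2 : k ≤ n - 3)
    (G : SimpleGraph (Fin n))
    (h0 : G.neighborSet ⟨0, by omega⟩ = {⟨1, by omega⟩, ⟨n - 1, by omega⟩})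
    (h1 : G.neighborSet ⟨1, by omega⟩ =
      {⟨0, by omega⟩, ⟨2, by omega⟩, ⟨n - 1, by omega⟩})
    (h2 : G.neighborSet ⟨2, by omega⟩ =
      {⟨1, by omega⟩, ⟨3, by omega⟩, ⟨k, by omega⟩, ⟨n - 1, by omega⟩})
    (hlast : G.neighborSet ⟨n - 1, by omega⟩ =
      {⟨0, by omega⟩, ⟨1, by omega⟩, ⟨2, by omega⟩, ⟨k, by omega⟩, ⟨n - 2, by omega⟩})
    (hk' : G.neighborSet ⟨k, by omega⟩ =
      {u : Fin n | 2 ≤ u.val ∧ u ≠ ⟨k, by omega⟩})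
    (x : Fin n → ℝ) (hpos : ∀ i, 0 < x i)
    (heig : (signlessLaplacian G).mulVec x = qIndex G • x) :
    x ⟨0, by omega⟩ < x ⟨1, by omega⟩ := by
  refine stmt_5_general hpos heig ?_
  rw [h0, h1, Set.insert_sdiff_self_of_notMem (by grind),
    Set.insert_sdiff_self_of_notMem (by grind)]
  exact Set.ssubset_insert (by grind)
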